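/- Let F(t) = 0 for |t| ≤ 1 and F(t) = |t| for |t| > 1, and for s ∈ (1/2, 1] let F_s(t) = θ(t)|t|^s with θ(t) = (3/8)|t|^{1/2}(t² - (10/3)|t| + 5) for |t| ≤ 1, θ(t) = 1 for |t| > 1. Then F(t) ≤ F_s(t)^{1/s} ≤ F(t) + k₀ for all real t, where k₀ = ((3/8)(1 + 10/3 + 5))². -/

import Mathlib

/-!
For `1 < |t|` the cutoff `theta` is `1`, so `(Fs s t) ^ (1/s) = (|t| ^ s) ^ (1/s) = |t| = Fbar t`.
For `|t| ≤ 1` one has `Fbar t = 0`, and the triangle inequality bounds `theta t`, hence `Fs s t`,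
by `M = (3/8) * (1 + 10/3 + 5)`. Since `1 ≤ M` and `1/s ≤ 2`, this gives
`(Fs s t) ^ (1/s) ≤ M ^ (1/s) ≤ M ^ 2`.
-/

noncomputable def theta (t : ℝ) : ℝ :=
  if |t| ≤ 1 then (3/8) * |t| ^ ((1:ℝ)/2) * (t^2 - (10/3) * |t| + 5) else 1

noncomputable def Fs (s t : ℝ) : ℝ := theta t * |t| ^ s

noncomputable def Fbar (t : ℝ) : ℝ := if |t| ≤ 1 then 0 else |t|

theorem theta_nonneg (t : ℝ) : 0 ≤ theta t := by
  unfold theta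
  split_ifs with h
  · have h0 := abs_nonneg t
    have : 0 ≤ t ^ 2 - (10/3) * |t| + 5 := by nlinarith [sq_nonneg t]
    positivity
  · exact zero_le_one

theorem theta_le_of_abs_le_one {t : ℝ} (h : |t| ≤ 1) : theta t ≤ (3/8) * (1 + 10/3 + 5) := by
  rw [theta, if_pos h]
  have h0 := abs_nonneg t
  have hp : |t| ^ ((1:ℝ)/2) ≤ 1 := Real.rpow_le_one h0 h (by norm_num)
  have hp0 : 0 ≤ |t| ^ ((1:ℝ)/2) := by positivity
  have hq : t ^ 2 - (10/3) * |t| + 5 ≤ 1 + 10/3 + 5 := by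
    nlinarith [sq_abs t]
  have hq0 : 0 ≤ t ^ 2 - (10/3) * |t| + 5 := by nlinarith [sq_nonneg t]
  nlinarith [mul_le_mul hp hq hq0 zero_le_one]

theorem stmt_14 (s : ℝ) (hs : s ∈ Set.Ioc (1/2 : ℝ) 1) (t : ℝ) :
    Fbar t ≤ (Fs s t) ^ (1/s) ∧
    (Fs s t) ^ (1/s) ≤ Fbar t + ((3/8) * (1 + 10/3 + 5))^2 := by
  obtain ⟨hs1, hs2⟩ := hs
  have hs0 : 0 < s := by linarith
  have h0 := abs_nonneg t
  by_cases h : |t| ≤ 1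
  · have hF0 : 0 ≤ Fs s t := mul_nonneg (theta_nonneg t) (by positivity)
    have hF : Fs s t ≤ (3/8) * (1 + 10/3 + 5) :=
      (mul_le_of_le_one_right (theta_nonneg t) (Real.rpow_le_one h0 h hs0.le)).trans
        (theta_le_of_abs_le_one h)
    have hs3 : 1 / s ≤ 2 := by
      rw [div_le_iff₀ hs0]; linarith
    rw [Fbar, if_pos h, zero_add]
    refine ⟨by positivity, ?_⟩
    calc (Fs s t) ^ (1/s) ≤ ((3/8) * (1 + 10/3 + 5) : ℝ) ^ (1/s) :=
          Real.rpow_le_rpow hF0 hF (by positivity)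
      _ ≤ ((3/8) * (1 + 10/3 + 5) : ℝ) ^ (2 : ℝ) :=
          Real.rpow_le_rpow_of_exponent_le (by norm_num) hs3
      _ = _ := Real.rpow_two _
  · have : (Fs s t) ^ (1/s) = |t| := by
      rw [Fs, theta, if_neg h, one_mul, ← Real.rpow_mul h0, mul_one_div_cancel hs0.ne',
        Real.rpow_one]
    rw [this, Fbar, if_neg h]
    exact ⟨le_rfl, le_add_of_nonneg_right (by positivity)⟩
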